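/- Let M be an m×p real matrix of rank p and N an n×p real matrix of rank p, and let (Ṁ, Ṅ) ∈ ℝ^{m×p} × ℝ^{n×p}. Then there is a unique Ṙ ∈ ℝ^{p×p} solving the Sylvester equation NᵀN MᵀM Ṙ + Ṙ NᵀN MᵀM = −NᵀN MᵀṀ + Ṅᵀ N MᵀM, and for this Ṙ the pair (Ṁ + M Ṙ, Ṅ − N Ṙᵀ) satisfies the horizontality condition NᵀN Mᵀ(Ṁ + MṘ) = (Ṅ − NṘᵀ)ᵀ N MᵀM. Thus (Ṁ + M Ṙ, Ṅ − N Ṙᵀ) is the projection of (Ṁ,Ṅ) onto the horizontal space along the vertical space. -/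

import Mathlib

open Matrix

theorem aux_unit {m p : ℕ} (M : Matrix (Fin m) (Fin p) ℝ) (hM : M.rank = p) :
    IsUnit (Mᵀ * M).det := by
  rw [← Matrix.isUnit_iff_isUnit_det]
  have h : (Mᵀ * M).rank = p := by rw [Matrix.rank_transpose_mul_self, hM]
  rw [← Matrix.mulVec_surjective_iff_isUnit]
  have h2 : LinearMap.range (Mᵀ * M).mulVecLin = ⊤ := by
    apply Submodule.eq_top_of_finrank_eq
    rw [Matrix.rank] at h
    simpa using h
  exact LinearMap.range_eq_top.mp h2

theorem aux_inj {m n p : ℕ} (M : Matrix (Fin m) (Fin p) ℝ) (N : Matrix (Fin n) (Fin p) ℝ)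
    (hM : M.rank = p) (hN : N.rank = p) (R : Matrix (Fin p) (Fin p) ℝ)
    (h : Nᵀ * N * (Mᵀ * M) * R + R * (Nᵀ * N * (Mᵀ * M)) = 0) : R = 0 := by
  have uA := aux_unit N hN
  have uB := aux_unit M hM
  have sA : ((Nᵀ * N)⁻¹)ᵀ = (Nᵀ * N)⁻¹ := by rw [Matrix.transpose_nonsing_inv]; simp
  have sB : ((Mᵀ * M)⁻¹)ᵀ = (Mᵀ * M)⁻¹ := by rw [Matrix.transpose_nonsing_inv]; simp
  obtain ⟨A, hA⟩ : ∃ A, A = Nᵀ * N := ⟨_, rfl⟩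
  obtain ⟨B, hB⟩ : ∃ B, B = Mᵀ * M := ⟨_, rfl⟩
  rw [← hA] at uA sA h
  rw [← hB] at uB sB h
  have a1 : A * A⁻¹ = 1 := Matrix.mul_nonsing_inv _ uA
  have a2 : A⁻¹ * A = 1 := Matrix.nonsing_inv_mul _ uA
  have b1 : B * B⁻¹ = 1 := Matrix.mul_nonsing_inv _ uB
  have b2 : B⁻¹ * B = 1 := Matrix.nonsing_inv_mul _ uB
  have k1 : ((N * A⁻¹ * R * Nᵀ)ᵀ * (N * A⁻¹ * R * Nᵀ)).trace
      = (B⁻¹ * Rᵀ * A⁻¹ * (R * (A * B))).trace := by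
    have e : (N * A⁻¹ * R * Nᵀ)ᵀ * (N * A⁻¹ * R * Nᵀ) = N * (Rᵀ * (A⁻¹ * A) * A⁻¹ * R * Nᵀ) := by
      simp only [Matrix.transpose_mul, Matrix.transpose_transpose, sA]
      rw [hA]; simp only [Matrix.mul_assoc]
    have e2 : B⁻¹ * Rᵀ * A⁻¹ * (R * (A * B)) = B⁻¹ * (Rᵀ * A⁻¹ * R * A * B) := by
      simp only [Matrix.mul_assoc]
    rw [e, a2, Matrix.trace_mul_comm, e2, Matrix.trace_mul_comm B⁻¹, Matrix.mul_assoc _ B, b1,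
      Matrix.mul_one, Matrix.mul_one, Matrix.mul_assoc _ Nᵀ, ← hA]
  have k2 : ((M * R * B⁻¹ * Mᵀ)ᵀ * (M * R * B⁻¹ * Mᵀ)).trace
      = (B⁻¹ * Rᵀ * A⁻¹ * (A * B * R)).trace := by
    have e : (M * R * B⁻¹ * Mᵀ)ᵀ * (M * R * B⁻¹ * Mᵀ) = M * (B⁻¹ * Rᵀ * B * R * B⁻¹ * Mᵀ) := by
      simp only [Matrix.transpose_mul, Matrix.transpose_transpose, sB]
      rw [hB]; simp only [Matrix.mul_assoc]
    have e2 : B⁻¹ * Rᵀ * A⁻¹ * (A * B * R) = B⁻¹ * Rᵀ * (A⁻¹ * A) * B * R := by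
      simp only [Matrix.mul_assoc]
    rw [e, e2, a2, Matrix.trace_mul_comm, Matrix.mul_assoc _ Mᵀ, ← hB, Matrix.mul_assoc _ B⁻¹, b2,
      Matrix.mul_one, Matrix.mul_one]
  have s : (B⁻¹ * Rᵀ * A⁻¹ * (A * B * R)).trace + (B⁻¹ * Rᵀ * A⁻¹ * (R * (A * B))).trace = 0 := by
    rw [← Matrix.trace_add, ← Matrix.mul_add, h]; simp
  have p1 := (Matrix.posSemidef_conjTranspose_mul_self (N * A⁻¹ * R * Nᵀ)).trace_nonneg
  have p2 := (Matrix.posSemidef_conjTranspose_mul_self (M * R * B⁻¹ * Mᵀ)).trace_nonneg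
  rw [Matrix.conjTranspose_eq_transpose_of_trivial] at p1 p2
  have z : ((N * A⁻¹ * R * Nᵀ)ᵀ * (N * A⁻¹ * R * Nᵀ)).trace = 0 := by linarith
  rw [← Matrix.conjTranspose_eq_transpose_of_trivial,
    Matrix.trace_conjTranspose_mul_self_eq_zero_iff] at z
  have f : Nᵀ * (N * A⁻¹ * R * Nᵀ) * N = A * A⁻¹ * R * A := by
    rw [hA]; simp only [Matrix.mul_assoc]
  rw [z, a1] at f
  have : R = 1 * R * A * A⁻¹ := by rw [Matrix.mul_assoc _ A, a1]; simp
  rw [this, ← f]; simp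

/-- Horizontal projection in the weighted geometry: there is a unique Ṙ solving the Sylvester
equation NᵀN MᵀM Ṙ + Ṙ NᵀN MᵀM = −NᵀN MᵀṀ + ṄᵀN MᵀM, and the resulting pair
(Ṁ + M Ṙ, Ṅ − N Ṙᵀ) is horizontal. -/
theorem horizontal_projection_weighted (m n p : ℕ) (hp : 0 < p) (hpm : p ≤ m) (hpn : p ≤ n)
    (M : Matrix (Fin m) (Fin p) ℝ) (N : Matrix (Fin n) (Fin p) ℝ)
    (hM : M.rank = p) (hN : N.rank = p)
    (dM : Matrix (Fin m) (Fin p) ℝ) (dN : Matrix (Fin n) (Fin p) ℝ) :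
    (∃! dR : Matrix (Fin p) (Fin p) ℝ,
        Nᵀ * N * (Mᵀ * M) * dR + dR * (Nᵀ * N * (Mᵀ * M)) =
          -(Nᵀ * N * (Mᵀ * dM)) + dNᵀ * N * (Mᵀ * M)) ∧
    ∀ dR : Matrix (Fin p) (Fin p) ℝ,
      Nᵀ * N * (Mᵀ * M) * dR + dR * (Nᵀ * N * (Mᵀ * M)) =
          -(Nᵀ * N * (Mᵀ * dM)) + dNᵀ * N * (Mᵀ * M) →
      Nᵀ * N * (Mᵀ * (dM + M * dR)) = (dN - N * dRᵀ)ᵀ * N * (Mᵀ * M) := by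
  constructor
  · let L : Matrix (Fin p) (Fin p) ℝ →ₗ[ℝ] Matrix (Fin p) (Fin p) ℝ :=
      LinearMap.mulLeft ℝ (Nᵀ * N * (Mᵀ * M)) + LinearMap.mulRight ℝ (Nᵀ * N * (Mᵀ * M))
    have hinj : Function.Injective L := by
      rw [injective_iff_map_eq_zero]
      intro R hR
      exact aux_inj M N hM hN R hR
    have hbij : Function.Bijective L := ⟨hinj, LinearMap.injective_iff_surjective.mp hinj⟩
    exact hbij.existsUnique _
  · intro dR h
    simp only [Matrix.transpose_sub, Matrix.transpose_mul, Matrix.transpose_transpose,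
      Matrix.mul_add, Matrix.sub_mul, Matrix.mul_assoc] at h ⊢
    rw [eq_sub_iff_add_eq, add_assoc, h]
    abel
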